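/- For every x ∈ ℝ, the principal value integral of the Gaussian against the Cauchy kernel satisfies lim_{ε→0⁺} ∫_{{y : |x−y|>ε}} e^{−y²}/(x−y) dy = 2√π · e^{−x²} ∫_0^x e^{y²} dy. -/

import Mathlib

open MeasureTheory Filter

/-!
After the substitution `y = x - u` the truncated integral is `∫_{|u|>ε} e^{-(x-u)²}/u du`. The odd
function `e^{-x²-u²}/u` integrates to `0` over `{|u| > ε}`, so it may be subtracted, leaving
`e^{-x²} e^{-u²} (e^{2xu} - 1)/u = ∫_0^x 2 e^{-x²} e^{t²} e^{-(u-t)²} dt` (`inner_integral`).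
The kernel on the right, `pvKernel`, is integrable on `(0,x) × ℝ` (`integrable_pvKernel`). Hence the
limit `ε → 0⁺` is the integral over all of `ℝ`, and by Fubini this is
`∫_0^x 2 e^{-x²} e^{t²} √π dt`.
-/

/-- The kernel `2 e^{-x²} e^{t²} e^{-(u-t)²} = 2 e^{-x²-u²} e^{2tu}`, written with the square completed
in `u`. -/
noncomputable def pvKernel (x t u : ℝ) : ℝ :=
  2 * Real.exp (-x ^ 2) * Real.exp (t ^ 2) * Real.exp (-(u - t) ^ 2)

lemma continuous_pvKernel (x : ℝ) : Continuous (Function.uncurry (pvKernel x)) := by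
  unfold pvKernel Function.uncurry
  fun_prop

lemma integrable_exp_neg_sq : Integrable (fun u : ℝ => Real.exp (-u ^ 2)) := by
  simpa using integrable_exp_neg_mul_sq (b := 1) one_pos

lemma integral_pvKernel (x t : ℝ) :
    ∫ u, pvKernel x t u = 2 * Real.sqrt Real.pi * Real.exp (-x ^ 2) * Real.exp (t ^ 2) := by
  have h : ∫ u : ℝ, Real.exp (-(u - t) ^ 2) = Real.sqrt Real.pi := by
    rw [integral_sub_right_eq_self (fun u : ℝ => Real.exp (-u ^ 2)) t]
    simpa using integral_gaussian 1
  unfold pvKernel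
  rw [integral_const_mul, h]
  ring

lemma integrable_pvKernel (x a b : ℝ) :
    Integrable (Function.uncurry (pvKernel x)) ((volume.restrict (Set.uIoc a b)).prod volume) := by
  rw [integrable_prod_iff (continuous_pvKernel x).aestronglyMeasurable]
  refine ⟨Eventually.of_forall fun t => ?_, ?_⟩
  · exact (integrable_exp_neg_sq.comp_sub_right t).const_mul
      (2 * Real.exp (-x ^ 2) * Real.exp (t ^ 2))
  · have h : (fun t => ∫ u, ‖Function.uncurry (pvKernel x) (t, u)‖) =
        fun t => 2 * Real.sqrt Real.pi * Real.exp (-x ^ 2) * Real.exp (t ^ 2) := by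
      funext t
      rw [← integral_pvKernel]
      congr 1 with u
      apply Real.norm_of_nonneg
      simp only [Function.uncurry, pvKernel]
      positivity
    rw [h, ← IntegrableOn, ← intervalIntegrable_iff]
    apply Continuous.intervalIntegrable
    fun_prop

lemma inner_integral (x u : ℝ) (hu : u ≠ 0) :
    ∫ t in (0:ℝ)..x, pvKernel x t u =
      Real.exp (-(x - u) ^ 2) / u - Real.exp (-x ^ 2) * (Real.exp (-u ^ 2) / u) := by
  have hd : ∀ t ∈ Set.uIcc 0 x,
      HasDerivAt (fun t => Real.exp (-x ^ 2 - u ^ 2 + 2 * t * u) / u) (pvKernel x t u) t := by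
    intro t _
    have h1 : HasDerivAt (fun t : ℝ => -x ^ 2 - u ^ 2 + 2 * t * u) (2 * u) t := by
      simpa using (((hasDerivAt_id t).const_mul 2).mul_const u).const_add (-x ^ 2 - u ^ 2)
    refine (h1.exp.div_const u).congr_deriv ?_
    unfold pvKernel
    rw [← mul_assoc, mul_div_cancel_right₀ _ hu, mul_assoc 2 (Real.exp _),
      ← Real.exp_add, mul_assoc 2 (Real.exp _), ← Real.exp_add]
    ring_nf
  rw [intervalIntegral.integral_eq_sub_of_hasDerivAt hd]
  · rw [← mul_div_assoc, ← Real.exp_add]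
    ring_nf
  · apply Continuous.intervalIntegrable
    unfold pvKernel
    fun_prop

lemma measurableSet_lt_abs (ε : ℝ) : MeasurableSet {u : ℝ | ε < |u|} :=
  measurableSet_lt measurable_const measurable_id.abs

lemma integrableOn_exp_neg_sq_div {ε : ℝ} (hε : 0 < ε) :
    IntegrableOn (fun u : ℝ => Real.exp (-u ^ 2) / u) {u : ℝ | ε < |u|} := by
  refine Integrable.mono' (integrable_exp_neg_sq.div_const ε).integrableOn
    (by fun_prop : Measurable _).aestronglyMeasurable ?_
  refine (ae_restrict_iff' (measurableSet_lt_abs ε)).2 (Eventually.of_forall fun u hu => ?_)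
  have hu : ε < |u| := hu
  rw [Real.norm_eq_abs, abs_div, Real.abs_exp]
  gcongr

lemma setIntegral_exp_neg_sq_div (ε : ℝ) :
    ∫ u in {u : ℝ | ε < |u|}, Real.exp (-u ^ 2) / u = 0 := by
  rw [← integral_indicator (measurableSet_lt_abs ε)]
  have h := integral_neg_eq_self
    ({u : ℝ | ε < |u|}.indicator fun u : ℝ => Real.exp (-u ^ 2) / u) volume
  have h2 : (fun u => ({u : ℝ | ε < |u|}.indicator fun u : ℝ => Real.exp (-u ^ 2) / u) (-u)) =
      fun u => -({u : ℝ | ε < |u|}.indicator fun u : ℝ => Real.exp (-u ^ 2) / u) u := by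
    funext u
    by_cases hu : ε < |u| <;> simp [Set.indicator, hu, div_neg]
  rw [h2, integral_neg] at h
  linarith

lemma integrable_inner (x : ℝ) : Integrable (fun u => ∫ t in (0:ℝ)..x, pvKernel x t u) := by
  simp only [intervalIntegral.intervalIntegral_eq_integral_uIoc]
  exact (integrable_pvKernel x 0 x).integral_prod_right.smul (if (0 : ℝ) ≤ x then (1 : ℝ) else -1)

/-- The truncated singular integral is the truncation of an integral with integrable integrand. -/
lemma truncated_eq (x : ℝ) {ε : ℝ} (hε : 0 < ε) :
    ∫ y in {y : ℝ | ε < |x - y|}, Real.exp (-y ^ 2) / (x - y) =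
      ∫ u in {u : ℝ | ε < |u|}, ∫ t in (0:ℝ)..x, pvKernel x t u := by
  have hshift : ∫ y in {y : ℝ | ε < |x - y|}, Real.exp (-y ^ 2) / (x - y) =
      ∫ u in {u : ℝ | ε < |u|}, Real.exp (-(x - u) ^ 2) / u := by
    rw [← integral_indicator (measurableSet_lt_abs ε), ← integral_sub_left_eq_self _ volume x,
      ← integral_indicator (measurableSet_lt measurable_const (by fun_prop))]
    congr 1 with y
    simp [Set.indicator]
  have hcongr : ∫ u in {u : ℝ | ε < |u|}, Real.exp (-(x - u) ^ 2) / u =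
      ∫ u in {u : ℝ | ε < |u|}, ((∫ t in (0:ℝ)..x, pvKernel x t u) +
        Real.exp (-x ^ 2) * (Real.exp (-u ^ 2) / u)) := by
    refine setIntegral_congr_fun (measurableSet_lt_abs ε) fun u hu => ?_
    have hu0 : u ≠ 0 := abs_pos.1 (hε.trans hu)
    simp only [inner_integral x u hu0, sub_add_cancel]
  rw [hshift, hcongr, integral_add (integrable_inner x).integrableOn
    ((integrableOn_exp_neg_sq_div hε).const_mul _), integral_const_mul,
    setIntegral_exp_neg_sq_div, mul_zero, add_zero]

lemma tendsto_truncation {g : ℝ → ℝ} (hg : Integrable g) :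
    Tendsto (fun ε : ℝ => ∫ u in {u : ℝ | ε < |u|}, g u) (nhdsWithin 0 (Set.Ioi 0))
      (nhds (∫ u, g u)) := by
  simp only [← integral_indicator (measurableSet_lt_abs _)]
  refine tendsto_integral_filter_of_dominated_convergence (fun u => ‖g u‖)
    (Eventually.of_forall fun ε => hg.aestronglyMeasurable.indicator (measurableSet_lt_abs ε))
    (Eventually.of_forall fun ε => Eventually.of_forall fun u => norm_indicator_le_norm_self _ _)
    hg.norm ?_
  -- for `u ≠ 0` the truncation at `u` is inactive once `ε < |u|`
  filter_upwards [Measure.ae_ne volume (0 : ℝ)] with u hu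
  refine tendsto_const_nhds.congr' ?_
  filter_upwards [nhdsWithin_le_nhds (Iio_mem_nhds (abs_pos.2 hu))] with ε hε
  exact (Set.indicator_of_mem (s := {u : ℝ | ε < |u|}) hε g).symm

/-- **Principal value of the Gaussian against the Cauchy kernel.**
For every `x ∈ ℝ`,
`p.v.∫_ℝ e^{-y²}/(x-y) dy = 2√π e^{-x²} ∫_0^x e^{y²} dy`,
where the principal value is the limit as `ε → 0⁺` of the integral over
`{y : |x - y| > ε}`. -/
theorem pv_gaussian_cauchy (x : ℝ) :
    Tendsto (fun ε : ℝ => ∫ y in {y : ℝ | ε < |x - y|}, Real.exp (-y ^ 2) / (x - y))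
      (nhdsWithin 0 (Set.Ioi 0))
      (nhds (2 * Real.sqrt Real.pi * Real.exp (-x ^ 2) * ∫ y in (0:ℝ)..x, Real.exp (y ^ 2))) := by
  have hfubini : ∫ u, ∫ t in (0:ℝ)..x, pvKernel x t u =
      2 * Real.sqrt Real.pi * Real.exp (-x ^ 2) * ∫ y in (0:ℝ)..x, Real.exp (y ^ 2) := by
    rw [← intervalIntegral.integral_const_mul]
    simp only [← integral_pvKernel]
    simp only [intervalIntegral.intervalIntegral_eq_integral_uIoc]
    rw [integral_smul, integral_integral_swap (integrable_pvKernel x 0 x)]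
  rw [← hfubini]
  refine (tendsto_truncation (integrable_inner x)).congr' ?_
  filter_upwards [self_mem_nhdsWithin] with ε hε
  exact (truncated_eq x hε).symm
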